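/- Let S be a finite nonempty type, P : S → S → ℝ a row-stochastic matrix (P s s' ≥ 0 and ∑_{s'} P s s' = 1 for all s), R : S → ℝ, γ ∈ [0,1), and ρ, ρ' ∈ ℝ. If X : S → ℝ satisfies X s = R s + γ · ∑_{s'} P s s' · X s' − ρ for all s, and X' : S → ℝ satisfies X' s = R s + γ · ∑_{s'} P s s' · X' s' − ρ' for all s, then X' s = X s + (ρ − ρ')/(1−γ) for every s ∈ S. -/

import Mathlib

/-!
If `X` solves the equation with constant `ρ`, then, since a stochastic matrix fixes constants,
adding `c` to `X` lowers the constant by `(1 - γ) c`; hence `X + (ρ - ρ') / (1 - γ)` solves the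
equation with constant `ρ'`. The rows of `γ P` have absolute sum less than `1`, so `γ P` fixes no
nonzero vector, and solutions for a given constant are unique.
-/

open Matrix

theorem eq_zero_of_mulVec_eq_self {S K : Type*} [Fintype S] [Ring K] [LinearOrder K]
    [IsStrictOrderedRing K] {A : Matrix S S K} {v : S → K} (hA : ∀ s, ∑ t, |A s t| < 1)
    (hv : A *ᵥ v = v) : v = 0 := by
  cases isEmpty_or_nonempty S
  · exact Subsingleton.elim _ _
  obtain ⟨m, hm⟩ := Finite.exists_max fun s ↦ |v s|
  have hle : |v m| ≤ (∑ t, |A m t|) * |v m| :=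
    calc |v m| = |∑ t, A m t * v t| := congrArg abs (congrFun hv m).symm
      _ ≤ ∑ t, |A m t| * |v t| := by
        simpa only [abs_mul] using Finset.abs_sum_le_sum_abs (fun t ↦ A m t * v t) Finset.univ
      _ ≤ ∑ t, |A m t| * |v m| :=
        Finset.sum_le_sum fun t _ ↦ mul_le_mul_of_nonneg_left (hm t) (abs_nonneg _)
      _ = (∑ t, |A m t|) * |v m| := (Finset.sum_mul ..).symm
  have hmax : |v m| ≤ 0 := by
    by_contra! hpos
    exact hle.not_gt (mul_lt_of_lt_one_left hpos (hA m))
  exact funext fun s ↦ abs_nonpos_iff.mp ((hm s).trans hmax)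

/-- `X` solves the average reward adjusted Bellman evaluation equation for the transition
matrix `P`, expected rewards `R`, discount factor `γ` and average-reward constant `ρ`. These data
are arbitrary here; stochasticity of `P` and bounds on `γ` are separate hypotheses. -/
def IsAdjustedValue {S K : Type*} [Fintype S] [Ring K] (P : Matrix S S K) (R : S → K) (γ ρ : K)
    (X : S → K) : Prop :=
  ∀ s, X s = R s + γ * ∑ t, P s t * X t - ρ

namespace IsAdjustedValue

variable {S K : Type*} [Fintype S] {P : Matrix S S K} {R X Y : S → K} {γ ρ : K}

theorem add_const [CommRing K] (hX : IsAdjustedValue P R γ ρ X) (hP : ∀ s, ∑ t, P s t = 1)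
    (c : K) : IsAdjustedValue P R γ (ρ - (1 - γ) * c) fun s ↦ X s + c := by
  intro s
  have havg : ∑ t, P s t * (X t + c) = ∑ t, P s t * X t + c := by
    simp only [mul_add, Finset.sum_add_distrib, ← Finset.sum_mul, hP, one_mul]
  rw [havg]
  linear_combination hX s

theorem unique [CommRing K] [LinearOrder K] [IsStrictOrderedRing K]
    (hX : IsAdjustedValue P R γ ρ X) (hY : IsAdjustedValue P R γ ρ Y)
    (hP : ∀ s, ∑ t, |P s t| ≤ 1) (hγ : |γ| < 1) : X = Y := by
  have hrow (s : S) : ∑ t, |(γ • P) s t| < 1 := by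
    simp only [Matrix.smul_apply, smul_eq_mul, abs_mul, ← Finset.mul_sum]
    exact (mul_le_of_le_one_right (abs_nonneg γ) (hP s)).trans_lt hγ
  have hfix : (γ • P) *ᵥ (X - Y) = X - Y := by
    ext s
    rw [smul_mulVec, mulVec_sub]
    simp only [Pi.smul_apply, Pi.sub_apply, smul_eq_mul, mulVec, dotProduct]
    linear_combination hY s - hX s
  exact sub_eq_zero.mp (eq_zero_of_mulVec_eq_self hrow hfix)

end IsAdjustedValue

theorem stmt_7_general {S K : Type*} [Fintype S] [Field K] [LinearOrder K] [IsStrictOrderedRing K]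
    {P : Matrix S S K} (hP0 : ∀ s t, 0 ≤ P s t) (hP1 : ∀ s, ∑ t, P s t = 1)
    {R : S → K} {γ : K} (hγ : |γ| < 1) {ρ ρ' : K} {X X' : S → K}
    (hX : IsAdjustedValue P R γ ρ X) (hX' : IsAdjustedValue P R γ ρ' X') (s : S) :
    X' s = X s + (ρ - ρ') / (1 - γ) := by
  have hγ1 : 1 - γ ≠ 0 := (sub_pos.mpr (abs_lt.mp hγ).2).ne'
  have hshift : IsAdjustedValue P R γ ρ' fun s ↦ X s + (ρ - ρ') / (1 - γ) := by
    simpa only [mul_div_cancel₀ _ hγ1, sub_sub_cancel] using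
      hX.add_const hP1 ((ρ - ρ') / (1 - γ))
  have hrow (s : S) : ∑ t, |P s t| ≤ 1 := by simp only [abs_of_nonneg (hP0 s _), hP1, le_refl]
  exact congrFun (hX'.unique hshift hrow hγ) s

/-- Two solutions of the average reward adjusted Bellman evaluation equation
with average-reward constants ρ and ρ' differ by the constant (ρ − ρ')/(1−γ). -/
theorem stmt_7 {S : Type*} [Fintype S] [Nonempty S] (P : S → S → ℝ)
    (hP0 : ∀ s s' : S, 0 ≤ P s s') (hP1 : ∀ s : S, ∑ s' : S, P s s' = 1)
    (R : S → ℝ) (γ : ℝ) (hγ : γ ∈ Set.Ico (0 : ℝ) 1) (ρ ρ' : ℝ)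
    (X X' : S → ℝ)
    (hXeq : ∀ s : S, X s = R s + γ * ∑ s' : S, P s s' * X s' - ρ)
    (hX'eq : ∀ s : S, X' s = R s + γ * ∑ s' : S, P s s' * X' s' - ρ') :
    ∀ s : S, X' s = X s + (ρ - ρ') / (1 - γ) :=
  stmt_7_general hP0 hP1 ((abs_of_nonneg hγ.1).trans_lt hγ.2) hXeq hX'eq
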